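/- Let π and π̃ be two policies of a finite Markov decision process with discount factor γ ∈ [0,1), let ε_max = max_{s,a} |A^π(s,a)|, and let α = D_TV^max(π, π̃). Then the gap between the true performance of π̃ and the surrogate objective built at π satisfies the quadratic bound |η(π̃) − L_π(π̃)| ≤ 4 ε_max γ α² / (1−γ)². -/

import Mathlib

open Finset

noncomputable section

/-- Action-value function `Q^π(s,a) = r(s,a) + γ ∑_{s'} P(s'|s,a) V(s')`
(built from a given value function `V`). -/
def mdpQ {S A : Type*} [Fintype S] (P : S → A → S → ℝ) (r : S → A → ℝ) (γ : ℝ)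
    (V : S → ℝ) (s : S) (a : A) : ℝ :=
  r s a + γ * ∑ s', P s a s' * V s'

/-- Advantage function `A^π(s,a) = Q^π(s,a) − V^π(s)`. -/
def mdpAdv {S A : Type*} [Fintype S] (P : S → A → S → ℝ) (r : S → A → ℝ) (γ : ℝ)
    (V : S → ℝ) (s : S) (a : A) : ℝ :=
  mdpQ P r γ V s a - V s

/-- `V` solves the Bellman equation for policy `π`. -/
def IsBellman {S A : Type*} [Fintype S] [Fintype A] (P : S → A → S → ℝ)
    (r : S → A → ℝ) (γ : ℝ) (π : S → A → ℝ) (V : S → ℝ) : Prop :=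
  ∀ s, V s = ∑ a, π s a * (r s a + γ * ∑ s', P s a s' * V s')

/-- Policy performance `η(π) = ∑_s ρ₀(s) V^π(s)`. -/
def perf {S : Type*} [Fintype S] (ρ₀ V : S → ℝ) : ℝ := ∑ s, ρ₀ s * V s

/-- Time-`t` state distribution `μ_t^π`. -/
def stateDist {S A : Type*} [Fintype S] [Fintype A] (P : S → A → S → ℝ)
    (π : S → A → ℝ) (ρ₀ : S → ℝ) : ℕ → S → ℝ
  | 0 => ρ₀
  | t + 1 => fun s' => ∑ s, ∑ a, stateDist P π ρ₀ t s * π s a * P s a s'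

/-- Discounted state visitation frequency `ρ_π(s) = (1−γ) ∑_t γ^t μ_t^π(s)`. -/
def visitFreq {S A : Type*} [Fintype S] [Fintype A] (P : S → A → S → ℝ)
    (π : S → A → ℝ) (ρ₀ : S → ℝ) (γ : ℝ) (s : S) : ℝ :=
  (1 - γ) * ∑' t : ℕ, γ ^ t * stateDist P π ρ₀ t s

/-- Surrogate objective `L_π(π̃)`, built from the value function `V` of `π`. -/
def surrogate {S A : Type*} [Fintype S] [Fintype A] (P : S → A → S → ℝ)
    (r : S → A → ℝ) (γ : ℝ) (ρ₀ : S → ℝ) (π : S → A → ℝ) (V : S → ℝ)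
    (π' : S → A → ℝ) : ℝ :=
  perf ρ₀ V +
    (1 / (1 - γ)) * ∑ s, visitFreq P π ρ₀ γ s * ∑ a, π' s a * mdpAdv P r γ V s a

/-- Total variation distance between pmfs on a finite set. -/
def dTV {X : Type*} [Fintype X] (p q : X → ℝ) : ℝ := (1 / 2) * ∑ x, |p x - q x|

/-- `D_TV^max(π,π̃) = max_s D_TV(π(·|s) ‖ π̃(·|s))`. -/
def dTVmax {S A : Type*} [Fintype S] [Fintype A] (π π' : S → A → ℝ) : ℝ :=
  ⨆ s : S, dTV (π s) (π' s)

/-!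
Write `M`, `M̃` for the state-transition matrices of `π`, `π̃`, put `W = V^π̃ - V^π`, let `g(s)` be
the mean of `A^π(s, ·)` under `π̃`, and let `y = ρ_π / (1 - γ)`. Then `W = g + γ M̃ W` and
`y = ρ₀ + γ y M`, so pairing `W` with `y` gives
`η(π̃) - L_π(π̃) = ⟨ρ₀, W⟩ - ⟨y, g⟩ = γ ⟨y, (M̃ - M) W⟩`.
The two fixed-point equations also bound `W` in sup norm by `‖g‖ / (1 - γ)` and `y` in `ℓ¹` norm by
`1 / (1 - γ)`. One factor `2 α` comes from `M̃ - M`; the other comes from `g`, because the advantage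
of `π` averages to zero under `π` itself.
-/

theorem le_div_one_sub_of_le_add_mul {x b γ : ℝ} (hγ1 : γ < 1) (hx : x ≤ b + γ * x) :
    x ≤ b / (1 - γ) := by
  rw [le_div_iff₀ (sub_pos.2 hγ1)]
  linarith

section Vectors

open Matrix

variable {m n : Type*} [Fintype m] [Fintype n]

theorem abs_dotProduct_le (v w : n → ℝ) : |v ⬝ᵥ w| ≤ (∑ i, |v i|) * ‖w‖ :=
  calc |v ⬝ᵥ w| ≤ ∑ i, |v i * w i| := abs_sum_le_sum_abs _ _
    _ ≤ ∑ i, |v i| * ‖w‖ := sum_le_sum fun i _ => by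
        rw [abs_mul]
        gcongr
        exact norm_le_pi_norm w i
    _ = (∑ i, |v i|) * ‖w‖ := (sum_mul _ _ _).symm

theorem norm_mulVec_le_of_sum_abs_le {M : Matrix m n ℝ} {c : ℝ} (hc : 0 ≤ c)
    (hM : ∀ i, ∑ j, |M i j| ≤ c) (w : n → ℝ) : ‖M *ᵥ w‖ ≤ c * ‖w‖ := by
  refine (pi_norm_le_iff_of_nonneg (by positivity)).2 fun i => ?_
  exact (abs_dotProduct_le (M i) w).trans (by gcongr; exact hM i)

theorem sum_abs_vecMul_le_of_sum_abs_le {M : Matrix m n ℝ} {c : ℝ}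
    (hM : ∀ i, ∑ j, |M i j| ≤ c) (v : m → ℝ) : ∑ j, |(v ᵥ* M) j| ≤ (∑ i, |v i|) * c :=
  calc ∑ j, |(v ᵥ* M) j| ≤ ∑ j, ∑ i, |v i * M i j| :=
        sum_le_sum fun _ _ => abs_sum_le_sum_abs _ _
    _ = ∑ i, |v i| * ∑ j, |M i j| := by
        rw [sum_comm]
        simp only [abs_mul, mul_sum]
    _ ≤ ∑ i, |v i| * c := by
        gcongr with i
        exact hM i
    _ = (∑ i, |v i|) * c := (sum_mul _ _ _).symm

theorem dotProduct_sub_dotProduct_of_fixed_points {R : Type*} [CommRing R] {M M' : Matrix n n R}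
    {y ρ w g : n → R} {γ : R} (hy : y = ρ + γ • (y ᵥ* M)) (hw : w = g + γ • (M' *ᵥ w)) :
    ρ ⬝ᵥ w - y ⬝ᵥ g = γ * (y ⬝ᵥ ((M' - M) *ᵥ w)) := by
  have pair_y : y ⬝ᵥ w = ρ ⬝ᵥ w + γ * (y ⬝ᵥ (M *ᵥ w)) := by
    conv_lhs => rw [hy]
    rw [add_dotProduct, smul_dotProduct, dotProduct_mulVec, smul_eq_mul]
  have pair_w : y ⬝ᵥ w = y ⬝ᵥ g + γ * (y ⬝ᵥ (M' *ᵥ w)) := by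
    conv_lhs => rw [hw]
    rw [dotProduct_add, dotProduct_smul, smul_eq_mul]
  rw [sub_mulVec, dotProduct_sub]
  linear_combination pair_w - pair_y

theorem sum_abs_eq_one_of_nonneg {p : n → ℝ} (hp0 : ∀ i, 0 ≤ p i) (hp1 : ∑ i, p i = 1) :
    ∑ i, |p i| = 1 := by
  simp only [abs_of_nonneg (hp0 _), hp1]

end Vectors

section TotalVariation

variable {S A : Type*} [Fintype S] [Fintype A]

theorem sum_abs_sub_eq_two_mul_dTV (p q : A → ℝ) : ∑ a, |q a - p a| = 2 * dTV p q := by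
  simp only [dTV, abs_sub_comm (q _)]
  ring

theorem dTVmax_nonneg (π π' : S → A → ℝ) : 0 ≤ dTVmax π π' :=
  Real.iSup_nonneg fun _ => by unfold dTV; positivity

theorem dTV_le_dTVmax (π π' : S → A → ℝ) (s : S) : dTV (π s) (π' s) ≤ dTVmax π π' :=
  le_ciSup (f := fun s => dTV (π s) (π' s)) (Set.finite_range _).bddAbove s

theorem sum_abs_sub_le_two_mul_dTVmax (π π' : S → A → ℝ) (s : S) :
    ∑ a, |(π' - π) s a| ≤ 2 * dTVmax π π' := by
  simp only [Pi.sub_apply, sum_abs_sub_eq_two_mul_dTV]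
  linarith [dTV_le_dTVmax π π' s]

end TotalVariation

section MarkovDecisionProcess

open Matrix

variable {S A : Type*} [Fintype A]

/-- The state-to-state transition matrix of the chain in which actions are drawn from `π`. It is
defined, and linear in `π`, for arbitrary real weights `π`, so that differences of policies are
allowed. -/
def transitionMatrix (P : S → A → S → ℝ) (π : S → A → ℝ) : Matrix S S ℝ :=
  Matrix.of fun s => π s ᵥ* Matrix.of (P s)

theorem transitionMatrix_sub (P : S → A → S → ℝ) (π π' : S → A → ℝ) :
    transitionMatrix P (π' - π) = transitionMatrix P π' - transitionMatrix P π := by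
  ext s s'
  simp only [transitionMatrix, of_apply, Pi.sub_apply, sub_vecMul, Matrix.sub_apply]

variable [Fintype S] {P : S → A → S → ℝ} {r : S → A → ℝ} {γ : ℝ} {ρ₀ : S → ℝ} {π π' : S → A → ℝ}
  {V V' : S → ℝ}

theorem transitionMatrix_mulVec (P : S → A → S → ℝ) (π : S → A → ℝ) (f : S → ℝ) (s : S) :
    (transitionMatrix P π *ᵥ f) s = ∑ a, π s a * ∑ s', P s a s' * f s' :=
  (dotProduct_mulVec (π s) (Matrix.of (P s)) f).symm

theorem sum_abs_transitionMatrix_le {c : ℝ} (hP : ∀ s a, ∑ s', |P s a s'| ≤ 1)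
    (hπ : ∀ s, ∑ a, |π s a| ≤ c) (s : S) : ∑ s', |transitionMatrix P π s s'| ≤ c :=
  (sum_abs_vecMul_le_of_sum_abs_le (M := Matrix.of (P s)) (hP s) (π s)).trans
    ((mul_one _).trans_le (hπ s))

theorem stateDist_succ (P : S → A → S → ℝ) (π : S → A → ℝ) (ρ₀ : S → ℝ) (t : ℕ) :
    stateDist P π ρ₀ (t + 1) = stateDist P π ρ₀ t ᵥ* transitionMatrix P π := by
  ext s'
  simp only [stateDist, vecMul, dotProduct, transitionMatrix, of_apply, mul_sum, mul_assoc]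

theorem sum_abs_stateDist_le (hM : ∀ s, ∑ s', |transitionMatrix P π s s'| ≤ 1) (t : ℕ) :
    ∑ s, |stateDist P π ρ₀ t s| ≤ ∑ s, |ρ₀ s| := by
  induction t with
  | zero => rfl
  | succ t ih =>
    rw [stateDist_succ]
    exact (sum_abs_vecMul_le_of_sum_abs_le hM _).trans ((mul_one _).trans_le ih)

/-- The unnormalised discounted visitation frequency `∑ₜ γᵗ μₜ^π(s) = ρ_π(s) / (1 - γ)`. -/
def discountedOccupancy (P : S → A → S → ℝ) (π : S → A → ℝ) (ρ₀ : S → ℝ) (γ : ℝ) (s : S) : ℝ :=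
  ∑' t : ℕ, γ ^ t * stateDist P π ρ₀ t s

theorem summable_pow_mul_stateDist (hM : ∀ s, ∑ s', |transitionMatrix P π s s'| ≤ 1)
    (hγ0 : 0 ≤ γ) (hγ1 : γ < 1) (s : S) :
    Summable fun t : ℕ => γ ^ t * stateDist P π ρ₀ t s := by
  refine .of_norm_bounded ((summable_geometric_of_lt_one hγ0 hγ1).mul_right (∑ s, |ρ₀ s|))
    fun t => ?_
  have stateDist_le : |stateDist P π ρ₀ t s| ≤ ∑ s, |ρ₀ s| :=
    (single_le_sum (f := fun s => |stateDist P π ρ₀ t s|) (fun _ _ => abs_nonneg _)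
      (mem_univ s)).trans (sum_abs_stateDist_le hM t)
  rw [norm_mul, Real.norm_of_nonneg (by positivity), Real.norm_eq_abs]
  gcongr

theorem discountedOccupancy_eq_add_smul_vecMul
    (hM : ∀ s, ∑ s', |transitionMatrix P π s s'| ≤ 1) (hγ0 : 0 ≤ γ) (hγ1 : γ < 1) :
    discountedOccupancy P π ρ₀ γ =
      ρ₀ + γ • (discountedOccupancy P π ρ₀ γ ᵥ* transitionMatrix P π) := by
  have summable_terms (s : S) : Summable fun t : ℕ => γ ^ t * stateDist P π ρ₀ t s :=
    summable_pow_mul_stateDist hM hγ0 hγ1 s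
  ext s'
  have hasSum_tail : HasSum (fun t : ℕ => γ ^ (t + 1) * stateDist P π ρ₀ (t + 1) s')
      (γ * (discountedOccupancy P π ρ₀ γ ᵥ* transitionMatrix P π) s') := by
    have hasSum_vecMul : HasSum
        (fun t : ℕ => ∑ s, γ ^ t * stateDist P π ρ₀ t s * transitionMatrix P π s s')
        ((discountedOccupancy P π ρ₀ γ ᵥ* transitionMatrix P π) s') :=
      hasSum_sum fun s _ => (summable_terms s).hasSum.mul_right _
    refine (hasSum_vecMul.mul_left γ).congr_fun fun t => ?_
    simp only [stateDist_succ, pow_succ', vecMul, dotProduct, mul_sum, mul_assoc]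
  rw [discountedOccupancy, (summable_terms s').tsum_eq_zero_add, hasSum_tail.tsum_eq, pow_zero,
    one_mul]
  rfl

theorem sum_abs_discountedOccupancy_le (hM : ∀ s, ∑ s', |transitionMatrix P π s s'| ≤ 1)
    (hγ0 : 0 ≤ γ) (hγ1 : γ < 1) :
    ∑ s, |discountedOccupancy P π ρ₀ γ s| ≤ (∑ s, |ρ₀ s|) / (1 - γ) := by
  set y := discountedOccupancy P π ρ₀ γ
  have fixed_point : y = ρ₀ + γ • (y ᵥ* transitionMatrix P π) :=
    discountedOccupancy_eq_add_smul_vecMul hM hγ0 hγ1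
  refine le_div_one_sub_of_le_add_mul hγ1 ?_
  calc ∑ s, |y s| ≤ ∑ s, (|ρ₀ s| + γ * |(y ᵥ* transitionMatrix P π) s|) :=
        sum_le_sum fun s _ => by
          conv_lhs => rw [fixed_point]
          refine (abs_add_le _ _).trans_eq ?_
          rw [Pi.smul_apply, smul_eq_mul, abs_mul, abs_of_nonneg hγ0]
    _ = ∑ s, |ρ₀ s| + γ * ∑ s, |(y ᵥ* transitionMatrix P π) s| := by
        rw [sum_add_distrib, mul_sum]
    _ ≤ ∑ s, |ρ₀ s| + γ * ∑ s, |y s| := by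
        gcongr _ + γ * ?_
        simpa only [mul_one] using sum_abs_vecMul_le_of_sum_abs_le hM y

/-- The advantage relative to the value function `V`, averaged over actions drawn from `π`. -/
def expectedAdv (P : S → A → S → ℝ) (r : S → A → ℝ) (γ : ℝ) (V : S → ℝ) (π : S → A → ℝ)
    (s : S) : ℝ :=
  π s ⬝ᵥ mdpAdv P r γ V s

theorem surrogate_eq_perf_add_dotProduct (hγ1 : γ ≠ 1) :
    surrogate P r γ ρ₀ π V π' =
      perf ρ₀ V + discountedOccupancy P π ρ₀ γ ⬝ᵥ expectedAdv P r γ V π' := by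
  have one_sub_ne_zero : 1 - γ ≠ 0 := sub_ne_zero.2 hγ1.symm
  rw [surrogate, mul_sum]
  congr 1
  refine sum_congr rfl fun s _ => ?_
  rw [visitFreq, ← mul_assoc, ← mul_assoc, one_div, inv_mul_cancel₀ one_sub_ne_zero, one_mul]
  rfl

theorem expectedAdv_eq_sum_mdpQ_sub (hπ : ∀ s, ∑ a, π s a = 1) (s : S) :
    expectedAdv P r γ V π s = ∑ a, π s a * mdpQ P r γ V s a - V s := by
  simp only [expectedAdv, dotProduct, mdpAdv, mul_sub, sum_sub_distrib, ← sum_mul, hπ, one_mul]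

theorem sum_mul_mdpQ (P : S → A → S → ℝ) (r : S → A → ℝ) (γ : ℝ) (V : S → ℝ) (π : S → A → ℝ)
    (s : S) :
    ∑ a, π s a * mdpQ P r γ V s a =
      ∑ a, π s a * r s a + γ * (transitionMatrix P π *ᵥ V) s := by
  simp only [mdpQ, transitionMatrix_mulVec, mul_add, sum_add_distrib, mul_sum, mul_left_comm γ]

theorem IsBellman.expectedAdv_eq_zero (hV : IsBellman P r γ π V) (hπ : ∀ s, ∑ a, π s a = 1) :
    expectedAdv P r γ V π = 0 := by
  ext s
  rw [expectedAdv_eq_sum_mdpQ_sub hπ]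
  exact sub_eq_zero.2 (hV s).symm

theorem IsBellman.sub_eq_expectedAdv_add_smul_mulVec (hV' : IsBellman P r γ π' V')
    (hπ' : ∀ s, ∑ a, π' s a = 1) (V : S → ℝ) :
    V' - V = expectedAdv P r γ V π' + γ • (transitionMatrix P π' *ᵥ (V' - V)) := by
  ext s
  have bellman : V' s = ∑ a, π' s a * mdpQ P r γ V' s a := hV' s
  rw [sum_mul_mdpQ] at bellman
  simp only [Pi.sub_apply, Pi.add_apply, Pi.smul_apply, smul_eq_mul, mulVec_sub,
    expectedAdv_eq_sum_mdpQ_sub hπ', sum_mul_mdpQ]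
  linarith

theorem IsBellman.norm_expectedAdv_le {ε : ℝ} (hV : IsBellman P r γ π V)
    (hπ : ∀ s, ∑ a, π s a = 1) (hε0 : 0 ≤ ε) (hε : ∀ s, ‖mdpAdv P r γ V s‖ ≤ ε) :
    ‖expectedAdv P r γ V π'‖ ≤ 2 * dTVmax π π' * ε := by
  have hα0 : 0 ≤ dTVmax π π' := dTVmax_nonneg π π'
  refine (pi_norm_le_iff_of_nonneg (by positivity)).2 fun s => ?_
  have centred : expectedAdv P r γ V π' s = (π' - π) s ⬝ᵥ mdpAdv P r γ V s := by
    rw [Pi.sub_apply, sub_dotProduct]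
    exact (sub_eq_self.2 (congrFun (hV.expectedAdv_eq_zero hπ) s)).symm
  rw [centred]
  calc |(π' - π) s ⬝ᵥ mdpAdv P r γ V s|
      ≤ (∑ a, |(π' - π) s a|) * ‖mdpAdv P r γ V s‖ := abs_dotProduct_le _ _
    _ ≤ 2 * dTVmax π π' * ε := by
        gcongr
        exacts [sum_abs_sub_le_two_mul_dTVmax π π' s, hε s]

theorem IsBellman.norm_sub_le (hV' : IsBellman P r γ π' V') (hπ' : ∀ s, ∑ a, π' s a = 1)
    (hM' : ∀ s, ∑ s', |transitionMatrix P π' s s'| ≤ 1) (hγ0 : 0 ≤ γ) (hγ1 : γ < 1)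
    (V : S → ℝ) : ‖V' - V‖ ≤ ‖expectedAdv P r γ V π'‖ / (1 - γ) := by
  refine le_div_one_sub_of_le_add_mul hγ1 ?_
  calc ‖V' - V‖ = ‖expectedAdv P r γ V π' + γ • (transitionMatrix P π' *ᵥ (V' - V))‖ := by
        rw [← hV'.sub_eq_expectedAdv_add_smul_mulVec hπ' V]
    _ ≤ ‖expectedAdv P r γ V π'‖ + γ * ‖transitionMatrix P π' *ᵥ (V' - V)‖ := by
        refine (norm_add_le _ _).trans_eq ?_
        rw [norm_smul, Real.norm_of_nonneg hγ0]
    _ ≤ ‖expectedAdv P r γ V π'‖ + γ * ‖V' - V‖ := by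
        gcongr
        simpa only [one_mul] using norm_mulVec_le_of_sum_abs_le zero_le_one hM' (V' - V)

theorem IsBellman.perf_sub_surrogate (hV' : IsBellman P r γ π' V') (hπ' : ∀ s, ∑ a, π' s a = 1)
    (hM : ∀ s, ∑ s', |transitionMatrix P π s s'| ≤ 1) (hγ0 : 0 ≤ γ) (hγ1 : γ < 1) :
    perf ρ₀ V' - surrogate P r γ ρ₀ π V π' =
      γ * (discountedOccupancy P π ρ₀ γ ⬝ᵥ (transitionMatrix P (π' - π) *ᵥ (V' - V))) := by
  rw [transitionMatrix_sub, ← dotProduct_sub_dotProduct_of_fixed_points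
    (discountedOccupancy_eq_add_smul_vecMul hM hγ0 hγ1)
    (hV'.sub_eq_expectedAdv_add_smul_mulVec hπ' V),
    surrogate_eq_perf_add_dotProduct hγ1.ne, dotProduct_sub, ← sub_sub]
  rfl

theorem IsBellman.abs_perf_sub_surrogate_le (hV' : IsBellman P r γ π' V')
    (hπ' : ∀ s, ∑ a, π' s a = 1) (hP : ∀ s a, ∑ s', |P s a s'| ≤ 1)
    (hπ : ∀ s, ∑ a, |π s a| ≤ 1) (hγ0 : 0 ≤ γ) (hγ1 : γ < 1) :
    |perf ρ₀ V' - surrogate P r γ ρ₀ π V π'| ≤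
      γ * ((∑ s, |ρ₀ s|) / (1 - γ) * (2 * dTVmax π π' * ‖V' - V‖)) := by
  have hM := sum_abs_transitionMatrix_le hP hπ
  have hα0 : 0 ≤ dTVmax π π' := dTVmax_nonneg π π'
  rw [hV'.perf_sub_surrogate hπ' hM hγ0 hγ1, abs_mul, abs_of_nonneg hγ0]
  refine mul_le_mul_of_nonneg_left ((abs_dotProduct_le _ _).trans ?_) hγ0
  exact mul_le_mul (sum_abs_discountedOccupancy_le hM hγ0 hγ1)
    (norm_mulVec_le_of_sum_abs_le (by positivity)
      (sum_abs_transitionMatrix_le hP (sum_abs_sub_le_two_mul_dTVmax π π')) _)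
    (norm_nonneg _) (div_nonneg (sum_nonneg fun _ _ => abs_nonneg _) (sub_nonneg.2 hγ1.le))

theorem norm_mdpAdv_le_iSup (P : S → A → S → ℝ) (r : S → A → ℝ) (γ : ℝ) (V : S → ℝ) (s : S) :
    ‖mdpAdv P r γ V s‖ ≤ ⨆ p : S × A, |mdpAdv P r γ V p.1 p.2| :=
  (pi_norm_le_iff_of_nonneg (Real.iSup_nonneg fun _ => abs_nonneg _)).2 fun a =>
    le_ciSup (f := fun p : S × A => |mdpAdv P r γ V p.1 p.2|) (Set.finite_range _).bddAbove (s, a)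

end MarkovDecisionProcess

/-- quadratic surrogate-gap bound: with
`ε_max = max_{s,a} |A^π(s,a)|` and `α = D_TV^max(π,π̃)`, we have
`|η(π̃) − L_π(π̃)| ≤ 4 ε_max γ α² / (1−γ)²`. -/
theorem surrogate_gap_quadratic_bound
    {S A : Type*} [Fintype S] [Fintype A] [Nonempty S] [Nonempty A]
    (P : S → A → S → ℝ) (r : S → A → ℝ) (γ : ℝ) (ρ₀ : S → ℝ)
    (hP0 : ∀ s a s', 0 ≤ P s a s') (hP1 : ∀ s a, ∑ s', P s a s' = 1)
    (hγ0 : 0 ≤ γ) (hγ1 : γ < 1)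
    (hρ0 : ∀ s, 0 ≤ ρ₀ s) (hρ1 : ∑ s, ρ₀ s = 1)
    (π πt : S → A → ℝ)
    (hπ0 : ∀ s a, 0 ≤ π s a) (hπ1 : ∀ s, ∑ a, π s a = 1)
    (hπt0 : ∀ s a, 0 ≤ πt s a) (hπt1 : ∀ s, ∑ a, πt s a = 1)
    (V Vt : S → ℝ)
    (hV : IsBellman P r γ π V) (hVt : IsBellman P r γ πt Vt)
    (εmax α : ℝ)
    (hε : εmax = ⨆ p : S × A, |mdpAdv P r γ V p.1 p.2|)
    (hα : α = dTVmax π πt) :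
    |perf ρ₀ Vt - surrogate P r γ ρ₀ π V πt| ≤
      4 * εmax * γ * α ^ 2 / (1 - γ) ^ 2 := by
  have hP (s : S) (a : A) : ∑ s', |P s a s'| ≤ 1 :=
    (sum_abs_eq_one_of_nonneg (hP0 s a) (hP1 s a)).le
  have hπ (s : S) : ∑ a, |π s a| ≤ 1 := (sum_abs_eq_one_of_nonneg (hπ0 s) (hπ1 s)).le
  have hπt (s : S) : ∑ a, |πt s a| ≤ 1 := (sum_abs_eq_one_of_nonneg (hπt0 s) (hπt1 s)).le
  have hε0 : 0 ≤ εmax := hε ▸ Real.iSup_nonneg fun _ => abs_nonneg _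
  have hα0 : 0 ≤ α := hα ▸ dTVmax_nonneg π πt
  have hγ : 0 < 1 - γ := sub_pos.2 hγ1
  have expectedAdv_le : ‖expectedAdv P r γ V πt‖ ≤ 2 * α * εmax :=
    hα ▸ hV.norm_expectedAdv_le hπ1 hε0 fun s => hε ▸ norm_mdpAdv_le_iSup P r γ V s
  have value_sub_le : ‖Vt - V‖ ≤ ‖expectedAdv P r γ V πt‖ / (1 - γ) :=
    hVt.norm_sub_le hπt1 (sum_abs_transitionMatrix_le hP hπt) hγ0 hγ1 V
  calc |perf ρ₀ Vt - surrogate P r γ ρ₀ π V πt|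
      ≤ γ * ((∑ s, |ρ₀ s|) / (1 - γ) * (2 * α * ‖Vt - V‖)) :=
        hα ▸ hVt.abs_perf_sub_surrogate_le hπt1 hP hπ hγ0 hγ1
    _ ≤ γ * (1 / (1 - γ) * (2 * α * (2 * α * εmax / (1 - γ)))) := by
        rw [sum_abs_eq_one_of_nonneg hρ0 hρ1]
        gcongr
        exact value_sub_le.trans (by gcongr)
    _ = 4 * εmax * γ * α ^ 2 / (1 - γ) ^ 2 := by
        field_simp
        ring
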